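/- If V and W are normal PO-dilators, then the composition V∘W is a normal PO-dilator; if moreover V and W are WPO-dilators, then V∘W is a WPO-dilator. -/

import Mathlib

universe u

/-- A bundled partial order. -/
structure POrd : Type (u + 1) where
  carrier : Type u
  [str : PartialOrder carrier]

instance : CoeSort POrd.{u} (Type u) := ⟨POrd.carrier⟩
attribute [instance] POrd.str

def POrd.of (X : Type u) [PartialOrder X] : POrd.{u} := ⟨X⟩

/-- A quasi embedding of partial orders. -/
def QuasiEmb {X Y : Type*} [PartialOrder X] [PartialOrder Y] (f : X → Y) : Prop :=
  ∀ x y : X, f x ≤ f y → x ≤ y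

/-- An embedding of partial orders. -/
def IsEmb {X Y : Type*} [PartialOrder X] [PartialOrder Y] (f : X → Y) : Prop :=
  ∀ x y : X, x ≤ y ↔ f x ≤ f y

theorem quasiEmb_id {X : Type*} [PartialOrder X] : QuasiEmb (id : X → X) :=
  fun _ _ h => h

theorem QuasiEmb.comp {X Y Z : Type*} [PartialOrder X] [PartialOrder Y] [PartialOrder Z]
    {f : X → Y} {g : Y → Z} (hf : QuasiEmb f) (hg : QuasiEmb g) :
    QuasiEmb (g ∘ f) := fun x y h => hf x y (hg _ _ h)

/-- `LeFin a b` is the relation `a ≤ᶠⁱⁿ b` on subsets of a partial order. -/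
def LeFin {X : Type*} [PartialOrder X] (a b : Set X) : Prop :=
  ∀ x ∈ a, ∃ y ∈ b, x ≤ y

/-- A PO-dilator: an embedding-preserving functor on partial orders with quasi embeddings,
together with a natural finite support. -/
structure PODilator : Type (u + 1) where
  obj : POrd.{u} → POrd.{u}
  map : {X Y : POrd.{u}} → (f : X → Y) → QuasiEmb f → (obj X → obj Y)
  supp : {X : POrd.{u}} → obj X → Set X
  map_quasiEmb : ∀ {X Y : POrd.{u}} (f : X → Y) (hf : QuasiEmb f), QuasiEmb (map f hf)
  map_id : ∀ (X : POrd.{u}), map (id : X → X) quasiEmb_id = id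
  map_comp : ∀ {X Y Z : POrd.{u}} (f : X → Y) (g : Y → Z) (hf : QuasiEmb f) (hg : QuasiEmb g),
      map (g ∘ f) (hf.comp hg) = map g hg ∘ map f hf
  map_emb : ∀ {X Y : POrd.{u}} (f : X → Y) (hf : QuasiEmb f), IsEmb f → IsEmb (map f hf)
  supp_finite : ∀ {X : POrd.{u}} (σ : obj X), (supp σ).Finite
  supp_natural : ∀ {X Y : POrd.{u}} (f : X → Y) (hf : QuasiEmb f) (σ : obj X),
      supp (map f hf σ) = f '' supp σ
  supp_cond : ∀ {X Y : POrd.{u}} (f : X → Y) (hf : QuasiEmb f), IsEmb f →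
      ∀ σ : obj Y, supp σ ⊆ Set.range f → σ ∈ Set.range (map f hf)

/-- Normality of a PO-dilator. -/
def PODilator.IsNormal (W : PODilator.{u}) : Prop :=
  ∀ (X : POrd.{u}) (σ τ : W.obj X), σ ≤ τ → LeFin (W.supp σ) (W.supp τ)

/-- Well partial orders. -/
def IsWpo (X : Type*) [PartialOrder X] : Prop :=
  ∀ f : ℕ → X, ∃ i j : ℕ, i < j ∧ f i ≤ f j

/-- A WPO-dilator preserves well partial orders. -/
def PODilator.IsWPO (W : PODilator.{u}) : Prop :=
  ∀ X : POrd.{u}, IsWpo X → IsWpo (W.obj X)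


theorem PODilator.map_congr (V : PODilator.{u}) {X Y : POrd.{u}} {f g : X → Y}
    (h : f = g) (hf : QuasiEmb f) (hg : QuasiEmb g) : V.map f hf = V.map g hg := by
  cases h; rfl

/-- The composition of two PO-dilators. -/
def PODilator.comp (V W : PODilator.{u}) : PODilator.{u} where
  obj X := V.obj (W.obj X)
  map f hf := V.map (W.map f hf) (W.map_quasiEmb f hf)
  supp {X} σ := ⋃ s ∈ V.supp σ, W.supp s
  map_quasiEmb f hf := V.map_quasiEmb _ _
  map_id X := by
    refine (V.map_congr (W.map_id X) _ quasiEmb_id).trans (V.map_id _)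
  map_comp f g hf hg := by
    refine (V.map_congr (W.map_comp f g hf hg) _
      ((W.map_quasiEmb f hf).comp (W.map_quasiEmb g hg))).trans ?_
    exact V.map_comp _ _ _ _
  map_emb f hf hemb := V.map_emb _ _ (W.map_emb f hf hemb)
  supp_finite σ := (V.supp_finite σ).biUnion fun s _ => W.supp_finite s
  supp_natural f hf σ := by
    show (⋃ s ∈ V.supp (V.map (W.map f hf) (W.map_quasiEmb f hf) σ), W.supp s)
      = f '' ⋃ s ∈ V.supp σ, W.supp s
    rw [V.supp_natural, Set.biUnion_image, Set.image_iUnion₂]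
    exact Set.iUnion₂_congr fun s _ => W.supp_natural f hf s
  supp_cond f hf hemb σ hσ := by
    apply V.supp_cond (W.map f hf) (W.map_quasiEmb f hf) (W.map_emb f hf hemb)
    intro s hs
    exact W.supp_cond f hf hemb s fun z hz => hσ (Set.mem_biUnion hs hz)


/-- The composition of normal PO-dilators is normal, and the composition of
WPO-dilators is a WPO-dilator. -/
theorem comp_isNormal_isWPO (V W : PODilator.{u}) (hV : V.IsNormal) (hW : W.IsNormal) :
    (V.comp W).IsNormal ∧ (V.IsWPO → W.IsWPO → (V.comp W).IsWPO) := by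
  refine ⟨?_, fun h1 h2 X hX => h1 _ (h2 X hX)⟩
  intro X σ τ h x hx
  obtain ⟨s, hs, hxs⟩ := Set.mem_iUnion₂.1 hx
  obtain ⟨t, ht, hst⟩ := hV _ σ τ h s hs
  obtain ⟨y, hy, hxy⟩ := hW _ s t hst x hxs
  exact ⟨y, Set.mem_iUnion₂.2 ⟨t, ht, hy⟩, hxy⟩
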